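/- Mehta's identity: the fourth power of the Vandermonde determinant in n variables equals the determinant of the 2n×2n matrix whose columns are, for each k=1,...,n, the column (x_k^i)_{0≤i≤2n-1} and the column of derivatives (i·x_k^{i-1})_{0≤i≤2n-1}: Δ_n(x)^4 = det( x_1^i, i x_1^{i-1}, x_2^i, i x_2^{i-1}, ..., x_n^i, i x_n^{i-1} )_{0≤i≤2n-1}. -/

import Mathlib

/-- The Vandermonde determinant `Δ_n(x) = ∏_{i<j} (x_i - x_j)`. -/
def vandermondeProd {R : Type*} [CommRing R] {n : ℕ} (x : Fin n → R) : R :=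
  ∏ i : Fin n, ∏ j ∈ Finset.univ.filter (fun j => i < j), (x i - x j)

/-!
Pair each node `x k` with a second node `y k`. Subtracting the column of powers of `x k` from that
of `y k` in the Vandermonde matrix of `x 0, y 0, x 1, y 1, …` and dividing by `y k - x k` leaves the
divided differences `∑ j < i, y k ^ j * x k ^ (i - 1 - j)`, so the determinant of the resulting
matrix is the Vandermonde product without the factors `y k - x k`. The division is legitimate over
any commutative ring after replacing `y k` by `y k + X`, since `y k + X - x k` is monic. At `y = x`
the divided differences become derivatives, and each pair `k < l` contributes `(x l - x k) ^ 4`.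
-/

open Finset Matrix Polynomial

section PairIndex

/-- The enumeration `(a, k) ↦ 2 * k + a` of the columns of a matrix in which the columns `(0, k)`
and `(1, k)` belonging to the `k`-th node are adjacent. -/
def pairIndexEquiv (n : ℕ) : Fin 2 × Fin n ≃ Fin (2 * n) :=
  (Equiv.prodComm _ _).trans (finProdFinEquiv.trans (finCongr (Nat.mul_comm n 2)))

variable {n : ℕ}

@[simp]
theorem val_pairIndexEquiv (p : Fin 2 × Fin n) :
    (pairIndexEquiv n p : ℕ) = p.1 + 2 * p.2 :=
  rfl

theorem Ioi_pairIndexEquiv_one (k : Fin n) :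
    Ioi (pairIndexEquiv n (1, k)) = (univ ×ˢ Ioi k).map (pairIndexEquiv n).toEmbedding := by
  ext j
  obtain ⟨⟨a, l⟩, rfl⟩ := (pairIndexEquiv n).surjective j
  simp only [mem_Ioi, ← Fin.val_fin_lt, val_pairIndexEquiv, Fin.coe_ofNat_eq_mod, Nat.mod_succ,
    mem_map_equiv, Equiv.symm_apply_apply, mem_product, mem_univ, true_and]
  omega

theorem Ioi_pairIndexEquiv_zero (k : Fin n) :
    Ioi (pairIndexEquiv n (0, k)) = Ici (pairIndexEquiv n (1, k)) := by
  ext j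
  simp only [mem_Ioi, ← Fin.val_fin_lt, val_pairIndexEquiv, Fin.coe_ofNat_eq_mod, Nat.zero_mod,
    zero_add, mem_Ici, ← Fin.val_fin_le, Nat.mod_succ]
  omega

variable {M : Type*} [CommMonoid M]

theorem prod_Ioi_pairIndexEquiv_one (f : Fin (2 * n) → M) (k : Fin n) :
    ∏ j ∈ Ioi (pairIndexEquiv n (1, k)), f j =
      ∏ l ∈ Ioi k, f (pairIndexEquiv n (0, l)) * f (pairIndexEquiv n (1, l)) := by
  simp [Ioi_pairIndexEquiv_one, prod_product, prod_mul_distrib]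

theorem prod_Ioi_pairIndexEquiv_zero (f : Fin (2 * n) → M) (k : Fin n) :
    ∏ j ∈ Ioi (pairIndexEquiv n (0, k)), f j =
      f (pairIndexEquiv n (1, k)) *
        ∏ l ∈ Ioi k, f (pairIndexEquiv n (0, l)) * f (pairIndexEquiv n (1, l)) := by
  rw [Ioi_pairIndexEquiv_zero, Ici_eq_cons_Ioi, prod_cons, prod_Ioi_pairIndexEquiv_one]

theorem prod_prod_Ioi_pairIndexEquiv (f : Fin (2 * n) → Fin (2 * n) → M) :
    ∏ i, ∏ j ∈ Ioi i, f i j =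
      (∏ k, f (pairIndexEquiv n (0, k)) (pairIndexEquiv n (1, k))) *
        ∏ k, ∏ l ∈ Ioi k,
          (f (pairIndexEquiv n (0, k)) (pairIndexEquiv n (0, l)) *
              f (pairIndexEquiv n (0, k)) (pairIndexEquiv n (1, l))) *
            (f (pairIndexEquiv n (1, k)) (pairIndexEquiv n (0, l)) *
              f (pairIndexEquiv n (1, k)) (pairIndexEquiv n (1, l))) := by
  rw [← (pairIndexEquiv n).prod_comp, Fintype.prod_prod_type, Fin.prod_univ_two]
  simp only [prod_Ioi_pairIndexEquiv_zero, prod_Ioi_pairIndexEquiv_one, prod_mul_distrib, mul_assoc]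

end PairIndex

section DividedDifference

variable {R κ : Type*} [CommRing R]

/-- The `m`-row Vandermonde matrix, powers running down the columns, of the nodes `x k` (columns
`(0, k)`) and `y k` (columns `(1, k)`). -/
def pairVandermonde (m : ℕ) (x y : κ → R) : Matrix (Fin m) (Fin 2 × κ) R :=
  of fun i p => ![x p.2, y p.2] p.1 ^ (i : ℕ)

/-- The matrix obtained from `pairVandermonde m x y` by replacing the powers of `y k` by the
divided differences `(y k ^ i - x k ^ i) / (y k - x k)`, written as polynomials so that they make
sense in any commutative ring and at `y k = x k`. -/
def dividedDifferenceMatrix (m : ℕ) (x y : κ → R) : Matrix (Fin m) (Fin 2 × κ) R :=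
  of fun i p => ![x p.2 ^ (i : ℕ),
    ∑ j ∈ range i, y p.2 ^ j * x p.2 ^ ((i : ℕ) - 1 - j)] p.1

theorem map_dividedDifferenceMatrix {S : Type*} [CommRing S] (φ : R →+* S) (m : ℕ) (x y : κ → R) :
    (dividedDifferenceMatrix m x y).map φ = dividedDifferenceMatrix m (φ ∘ x) (φ ∘ y) := by
  ext i ⟨a, k⟩
  fin_cases a <;> simp [dividedDifferenceMatrix]

theorem dividedDifferenceMatrix_self (m : ℕ) (x : κ → R) :
    dividedDifferenceMatrix m x x =
      of fun (i : Fin m) (p : Fin 2 × κ) =>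
        ![x p.2 ^ (i : ℕ), (i : ℕ) * x p.2 ^ ((i : ℕ) - 1)] p.1 := by
  simp only [dividedDifferenceMatrix, geom_sum₂_self]

theorem dividedDifferenceMatrix_mul_blockDiagonal [Fintype κ] [DecidableEq κ] (m : ℕ)
    (x y : κ → R) :
    dividedDifferenceMatrix m x y * blockDiagonal (fun k => !![1, 1; 0, y k - x k]) =
      pairVandermonde m x y := by
  ext i ⟨a, k⟩
  have divided_difference := (Commute.all (y k) (x k)).geom_sum₂_mul i
  rw [mul_apply, Fintype.sum_prod_type]
  fin_cases a <;>
    simp [blockDiagonal_apply, dividedDifferenceMatrix, pairVandermonde, divided_difference]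

variable {n : ℕ}

theorem det_pairVandermonde (x y : Fin n → R) :
    ((pairVandermonde (2 * n) x y).submatrix (pairIndexEquiv n) id).det =
      (∏ k, (y k - x k)) * ∏ k, ∏ l ∈ Ioi k,
        ((x l - x k) * (y l - x k)) * ((x l - y k) * (y l - y k)) := by
  let node : Fin 2 × Fin n → R := fun p => ![x p.2, y p.2] p.1
  have eq_vandermonde : (pairVandermonde (2 * n) x y).submatrix (pairIndexEquiv n) id =
      (vandermonde (node ∘ (pairIndexEquiv n).symm))ᵀ.submatrix
        (pairIndexEquiv n) (pairIndexEquiv n) := by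
    ext p q
    simp [pairVandermonde, vandermonde_apply, node]
  rw [eq_vandermonde, det_submatrix_equiv_self, det_transpose, det_vandermonde,
    prod_prod_Ioi_pairIndexEquiv]
  simp [node]

theorem det_dividedDifferenceMatrix_mul_prod_sub (x y : Fin n → R) :
    ((dividedDifferenceMatrix (2 * n) x y).submatrix (pairIndexEquiv n) id).det *
        ∏ k, (y k - x k) =
      (∏ k, ∏ l ∈ Ioi k, ((x l - x k) * (y l - x k)) * ((x l - y k) * (y l - y k))) *
        ∏ k, (y k - x k) := by
  let B := blockDiagonal fun k => !![1, 1; 0, y k - x k]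
  have det_B : B.det = ∏ k, (y k - x k) := by
    simp [B, det_blockDiagonal, det_fin_two_of]
  have factorization :
      (dividedDifferenceMatrix (2 * n) x y).submatrix (pairIndexEquiv n) id * B =
        (pairVandermonde (2 * n) x y).submatrix (pairIndexEquiv n) id := by
    rw [← dividedDifferenceMatrix_mul_blockDiagonal,
      submatrix_mul _ _ _ _ _ Function.bijective_id, submatrix_id_id]
  rw [mul_comm (∏ k, ∏ l ∈ Ioi k, _), ← det_pairVandermonde, ← factorization, det_mul, det_B]

theorem det_dividedDifferenceMatrix (x y : Fin n → R) :
    ((dividedDifferenceMatrix (2 * n) x y).submatrix (pairIndexEquiv n) id).det =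
      ∏ k, ∏ l ∈ Ioi k, ((x l - x k) * (y l - x k)) * ((x l - y k) * (y l - y k)) := by
  let x' : Fin n → R[X] := fun k => C (x k)
  let y' : Fin n → R[X] := fun k => X + C (y k)
  have monic_sub : (∏ k, (y' k - x' k)).Monic :=
    monic_prod_of_monic _ _ fun k _ => by
      simpa only [x', y', add_sub_assoc, ← C_sub] using monic_X_add_C (y k - x k)
  have deformed := monic_sub.isRegular.right (det_dividedDifferenceMatrix_mul_prod_sub x' y')
  have eval_x' : evalRingHom 0 ∘ x' = x := by ext k; simp [x']
  have eval_y' : evalRingHom 0 ∘ y' = y := by ext k; simp [y']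
  have specialized := congrArg (evalRingHom 0) deformed
  rw [RingHom.map_det, RingHom.mapMatrix_apply, ← submatrix_map, map_dividedDifferenceMatrix,
    eval_x', eval_y'] at specialized
  simpa [x', y', eval_prod] using specialized

theorem det_dividedDifferenceMatrix_self (x : Fin n → R) :
    ((dividedDifferenceMatrix (2 * n) x x).submatrix (pairIndexEquiv n) id).det =
      vandermondeProd x ^ 4 := by
  rw [det_dividedDifferenceMatrix, vandermondeProd]
  simp only [← prod_pow, filter_lt_eq_Ioi]
  exact prod_congr rfl fun k _ => prod_congr rfl fun l _ => by ring

end DividedDifference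

/-- Mehta's identity: the fourth power of the Vandermonde determinant in `n` variables
equals the determinant of the `2n×2n` matrix whose columns are, for each `k`, the column
`(x_k^i)_{0≤i≤2n-1}` and the column of derivatives `(i·x_k^{i-1})_{0≤i≤2n-1}`. -/
theorem vandermonde_pow_four_eq_det {R : Type*} [CommRing R] {n : ℕ} (x : Fin n → R) :
    (vandermondeProd x) ^ 4 =
      Matrix.det (Matrix.of fun (i c : Fin (2 * n)) =>
        if (c : ℕ) % 2 = 0 then
          x ⟨(c : ℕ) / 2, by have := c.isLt; omega⟩ ^ (i : ℕ)
        else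
          ((i : ℕ) : R) * x ⟨(c : ℕ) / 2, by have := c.isLt; omega⟩ ^ ((i : ℕ) - 1)) := by
  rw [← det_dividedDifferenceMatrix_self, dividedDifferenceMatrix_self,
    ← det_submatrix_equiv_self (pairIndexEquiv n)]
  congr 1
  ext p ⟨a, k⟩
  fin_cases a <;> simp [Nat.add_mul_div_left]
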